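/- Let (ℬ, 𝒜, i, e, l) be a cleft extension of abelian categories such that l is exact and e preserves projective objects. If the endofunctor F satisfies Fⁿ = 0 for a positive integer n, and Proj 𝒜 = add(P) for some projective object P of 𝒜, then IT(ℬ) ≤ IT(𝒜) ≤ n(IT(ℬ) + 1) − 1. -/

import Mathlib

open CategoryTheory Limits

attribute [local instance] CategoryTheory.Limits.HasFiniteBiproducts.of_hasFiniteProducts

noncomputable section

universe v u v' u'

/-- The `n`-th power of an endofunctor. -/
def fpow {C : Type u} [Category.{v} C] (G : C ⥤ C) : ℕ → (C ⥤ C)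
  | 0 => 𝟭 C
  | n + 1 => fpow G n ⋙ G

/-- `K` is a syzygy of `X`:  there is a short exact sequence `0 → K → P → X → 0`
with `P` projective. -/
def IsSyzygy {C : Type u} [Category.{v} C] [Abelian C] (K X : C) : Prop :=
  ∃ (P : C) (ι : K ⟶ P) (π : P ⟶ X) (w : ι ≫ π = 0),
    Projective P ∧ (ShortComplex.mk ι π w).ShortExact

/-- `K` is an `n`-th syzygy of `X` (a `0`-th syzygy of `X` is `X` itself). -/
def IsNthSyzygy {C : Type u} [Category.{v} C] [Abelian C] : ℕ → C → C → Prop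
  | 0, K, X => K = X
  | n + 1, K, X => ∃ Y : C, IsNthSyzygy n Y X ∧ IsSyzygy K Y

/-- `0 → X N → ⋯ → X 0 → 0` is exact. -/
def IsExactSeq {C : Type u} [Category.{v} C] [Abelian C] (N : ℕ) (X : ℕ → C)
    (d : ∀ n : ℕ, X (n + 1) ⟶ X n) : Prop :=
  Mono (d (N - 1)) ∧ Epi (d 0) ∧
    ∀ i : ℕ, i + 2 ≤ N →
      ∃ w : d (i + 1) ≫ d i = 0, (ShortComplex.mk (d (i + 1)) (d i) w).Exact

/-- `X` belongs to `add U`: `X` is a direct summand of a finite direct sum of copies of `U`. -/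
def InAdd {C : Type u} [Category.{v} C] [Abelian C] (U X : C) : Prop :=
  ∃ (n : ℕ) (s : X ⟶ ⨁ (fun _ : Fin n => U)) (p : (⨁ (fun _ : Fin n => U)) ⟶ X),
    s ≫ p = 𝟙 X

/-- `C` is an `(m, n)`-Igusa–Todorov category:  there is an object `U` such that every object
`A` admits an exact sequence `0 → U_m → ⋯ → U₁ → U₀ → Ωⁿ(A) → 0` with all `U_i ∈ add U`,
for some `n`-th syzygy `Ωⁿ(A)` of `A`. -/
def IsITCategory (C : Type u) [Category.{v} C] [Abelian C] (m n : ℕ) : Prop :=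
  ∃ U : C, ∀ A : C, ∃ (ΩA : C), IsNthSyzygy n ΩA A ∧
    ∃ (Us : ℕ → C) (_ : ∀ k : ℕ, k ≤ m → InAdd U (Us k))
      (d : ∀ k : ℕ, (fun j => if j = 0 then ΩA else Us (j - 1)) (k + 1) ⟶
        (fun j => if j = 0 then ΩA else Us (j - 1)) k),
      IsExactSeq (m + 1) (fun j => if j = 0 then ΩA else Us (j - 1)) d

/-- The Igusa–Todorov distance of an abelian category. -/
noncomputable def ITdist (C : Type u) [Category.{v} C] [Abelian C] : ℕ∞ :=
  sInf {x : ℕ∞ | ∃ m n : ℕ, x = (m : ℕ∞) ∧ IsITCategory C m n}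

section Add

variable {C : Type u} [Category.{v} C] [Abelian C]

/-- The morphisms `X ⟶ Y` that factor through a finite direct sum of copies of `U`. -/
def addIdeal (U X Y : C) : AddSubgroup (X ⟶ Y) where
  carrier := {f | ∃ (n : ℕ) (s : Fin n → (X ⟶ U)) (p : Fin n → (U ⟶ Y)), f = ∑ i, s i ≫ p i}
  zero_mem' := ⟨0, Fin.elim0, Fin.elim0, by simp⟩
  add_mem' := by
    rintro f g ⟨n, s, p, rfl⟩ ⟨m, t, q, rfl⟩
    exact ⟨n + m, Fin.append s t, Fin.append p q, by simp [Fin.sum_univ_add]⟩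
  neg_mem' := by
    rintro f ⟨n, s, p, rfl⟩
    exact ⟨n, fun i => -s i, p, by simp⟩

lemma comp_mem_addIdeal {U X Y : C} (s : X ⟶ U) (p : U ⟶ Y) : s ≫ p ∈ addIdeal U X Y :=
  ⟨1, fun _ => s, fun _ => p, by simp⟩

lemma addIdeal_comp {U X Y X' Y' : C} {f : X ⟶ Y} (hf : f ∈ addIdeal U X Y) (g : X' ⟶ X)
    (h : Y ⟶ Y') : g ≫ f ≫ h ∈ addIdeal U X' Y' := by
  obtain ⟨n, s, p, rfl⟩ := hf
  exact ⟨n, fun i => g ≫ s i, fun i => p i ≫ h, by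
    simp [Preadditive.sum_comp, Preadditive.comp_sum]⟩

lemma inAdd_iff {U X : C} : InAdd U X ↔ 𝟙 X ∈ addIdeal U X X := by
  constructor
  · rintro ⟨n, s, p, h⟩
    refine ⟨n, fun i => s ≫ biproduct.π _ i, fun i => biproduct.ι (fun _ : Fin n => U) i ≫ p, ?_⟩
    rw [← h]
    calc s ≫ p = s ≫ 𝟙 _ ≫ p := by rw [Category.id_comp]
      _ = _ := by
        rw [← biproduct.total]
        simp only [Preadditive.sum_comp, Preadditive.comp_sum, Category.assoc]
  · rintro ⟨n, s, p, h⟩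
    exact ⟨n, biproduct.lift s, biproduct.desc p, by rw [biproduct.lift_desc, h]⟩

lemma InAdd.comp_mem {U X Y Z : C} (hX : InAdd U X) (f : Y ⟶ X) (g : X ⟶ Z) :
    f ≫ g ∈ addIdeal U Y Z := by
  simpa using addIdeal_comp (inAdd_iff.1 hX) f g

lemma InAdd.trans {U V X : C} (hU : InAdd V U) (hX : InAdd U X) : InAdd V X := by
  obtain ⟨n, s, p, h⟩ := inAdd_iff.1 hX
  rw [inAdd_iff, h]
  exact sum_mem fun i _ => hU.comp_mem _ _

lemma InAdd.of_retract {U X Y : C} (hX : InAdd U X) (s : Y ⟶ X) (p : X ⟶ Y) (h : s ≫ p = 𝟙 Y) :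
    InAdd U Y := by
  rw [inAdd_iff, ← h]
  exact hX.comp_mem s p

lemma InAdd.self (U : C) : InAdd U U := by
  rw [inAdd_iff, ← Category.id_comp (𝟙 U)]
  exact comp_mem_addIdeal _ _

lemma InAdd.biprod {U X Y : C} (hX : InAdd U X) (hY : InAdd U Y) : InAdd U (X ⊞ Y) := by
  rw [inAdd_iff, ← biprod.total]
  exact add_mem (hX.comp_mem _ _) (hY.comp_mem _ _)

lemma InAdd.left (U V : C) : InAdd (U ⊞ V) U :=
  (InAdd.self _).of_retract biprod.inl biprod.fst (by simp)

lemma InAdd.right (U V : C) : InAdd (U ⊞ V) V :=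
  (InAdd.self _).of_retract biprod.inr biprod.snd (by simp)

lemma InAdd.of_isZero (U : C) {X : C} (hX : IsZero X) : InAdd U X := by
  rw [inAdd_iff, hX.eq_of_src (𝟙 X) 0]
  exact zero_mem _

lemma InAdd.map {D : Type u'} [Category.{v'} D] [Abelian D] (T : C ⥤ D) [T.Additive] {U X : C}
    (hX : InAdd U X) : InAdd (T.obj U) (T.obj X) := by
  obtain ⟨n, s, p, h⟩ := inAdd_iff.1 hX
  exact inAdd_iff.2 ⟨n, fun i => T.map (s i), fun i => T.map (p i), by
    rw [← T.map_id, h, T.map_sum]; simp⟩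

end Add

section ShortExact

variable {C : Type u} [Category.{v} C] [Abelian C]

/-- There is a short exact sequence `0 → X → Y → Z → 0`. -/
def HasShortExact (X Y Z : C) : Prop :=
  ∃ (f : X ⟶ Y) (g : Y ⟶ Z) (w : f ≫ g = 0), (ShortComplex.mk f g w).ShortExact

lemma isSyzygy_iff {K X : C} : IsSyzygy K X ↔ ∃ P : C, Projective P ∧ HasShortExact K P X := by
  constructor
  · rintro ⟨P, f, g, w, hP, h⟩
    exact ⟨P, hP, f, g, w, h⟩
  · rintro ⟨P, hP, f, g, w, h⟩
    exact ⟨P, f, g, w, hP, h⟩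

lemma hasShortExact_kernel {Y Z : C} (g : Y ⟶ Z) [Epi g] : HasShortExact (kernel g) Y Z :=
  ⟨kernel.ι g, g, kernel.condition g,
    { exact := ShortComplex.exact_of_f_is_kernel _ (kernelIsKernel g) }⟩

lemma HasShortExact.of_iso {X Y Z X' Y' Z' : C} (h : HasShortExact X Y Z) (a : X ≅ X')
    (b : Y ≅ Y') (c : Z ≅ Z') : HasShortExact X' Y' Z' := by
  obtain ⟨f, g, w, h⟩ := h
  refine ⟨a.inv ≫ f ≫ b.hom, b.inv ≫ g ≫ c.hom, by simp [reassoc_of% w], ?_⟩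
  exact ShortComplex.shortExact_of_iso (ShortComplex.isoMk a b c (by simp) (by simp)) h

lemma HasShortExact.map {D : Type u'} [Category.{v'} D] [Abelian D] (T : C ⥤ D) [T.Additive]
    [PreservesFiniteLimits T] [PreservesFiniteColimits T] {X Y Z : C} (h : HasShortExact X Y Z) :
    HasShortExact (T.obj X) (T.obj Y) (T.obj Z) := by
  obtain ⟨f, g, w, h⟩ := h
  exact ⟨T.map f, T.map g, by rw [← T.map_comp, w, T.map_zero], h.map_of_exact T⟩

lemma HasShortExact.isZero_right {X Y Z : C} (h : HasShortExact X Y Z) (hY : IsZero Y) :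
    IsZero Z := by
  obtain ⟨f, g, w, h⟩ := h
  have : Epi g := h.epi_g
  exact IsZero.of_epi g hY

lemma HasShortExact.biprod_right {X Y Z : C} (h : HasShortExact X Y Z) (Q : C) :
    HasShortExact X (Y ⊞ Q) (Z ⊞ Q) := by
  obtain ⟨f, g, w, h⟩ := h
  have : Mono f := h.mono_f
  have : Epi g := h.epi_g
  refine ⟨f ≫ biprod.inl, biprod.map g (𝟙 Q), by simp [reassoc_of% w], ?_⟩
  refine { exact := ?_, mono_f := mono_comp _ _, epi_g := ?_ }
  · refine ShortComplex.exact_of_f_is_kernel _ (KernelFork.IsLimit.ofι' _ _ fun {A} k hk => ?_)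
    dsimp at k hk
    have h1 : (k ≫ biprod.fst) ≫ g = 0 := by simpa using hk =≫ biprod.fst
    have h2 : k ≫ biprod.snd = 0 := by simpa using hk =≫ biprod.snd
    refine ⟨h.exact.lift (k ≫ biprod.fst) h1, ?_⟩
    dsimp
    ext
    · simpa using h.exact.lift_f (k ≫ biprod.fst) h1
    · simp [h2]
  · dsimp
    infer_instance

/-- If `Y` is the kernel of `Z ⟶ T` and `X` is a syzygy of `T` through `P`, then `Z` is a quotient
of `Y ⊞ P` by `X`. -/
lemma HasShortExact.rotate {X P T Y Z : C} (h : HasShortExact Y Z T) (h' : HasShortExact X P T)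
    (hP : Projective P) : HasShortExact X (Y ⊞ P) Z := by
  obtain ⟨f, g, w, h⟩ := h
  obtain ⟨ι, π, w', h'⟩ := h'
  have : Mono f := h.mono_f
  have : Epi g := h.epi_g
  have : Mono ι := h'.mono_f
  have : Epi π := h'.epi_g
  let φ : P ⟶ Z := Projective.factorThru π g
  have hφ : φ ≫ g = π := Projective.factorThru_comp π g
  have h0 : (ι ≫ φ) ≫ g = 0 := by rw [Category.assoc, hφ, w']
  let a : X ⟶ Y := h.exact.lift (ι ≫ φ) h0
  have ha : a ≫ f = ι ≫ φ := h.exact.lift_f (ι ≫ φ) h0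
  refine ⟨biprod.lift (-a) ι, biprod.desc f φ, by simp [ha], ?_⟩
  refine { exact := ?_, mono_f := ?_, epi_g := ?_ }
  · rw [ShortComplex.exact_iff_exact_up_to_refinements]
    intro A k hk
    dsimp at k hk
    have hk' : (k ≫ biprod.fst) ≫ f = -((k ≫ biprod.snd) ≫ φ) := by
      have : k ≫ (biprod.fst ≫ f + biprod.snd ≫ φ) = 0 := by
        rw [← biprod.desc_eq]; exact hk
      rw [Preadditive.comp_add] at this
      simpa using eq_neg_of_add_eq_zero_left this
    have hs : (k ≫ biprod.snd) ≫ π = 0 := by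
      have := hk' =≫ g
      rw [Category.assoc, w, comp_zero, Preadditive.neg_comp, Category.assoc, hφ] at this
      exact (neg_eq_zero.1 this.symm)
    refine ⟨A, 𝟙 A, inferInstance, h'.exact.lift (k ≫ biprod.snd) hs, ?_⟩
    have hl : h'.exact.lift (k ≫ biprod.snd) hs ≫ ι = k ≫ biprod.snd := h'.exact.lift_f _ hs
    dsimp
    ext
    · rw [← cancel_mono f]
      simp only [Category.id_comp, Category.assoc, biprod.lift_fst, Preadditive.neg_comp,
        Preadditive.comp_neg, ha, reassoc_of% hl]
      simpa using hk'
    · simp [hl]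
  · have : Mono (biprod.lift (-a) ι ≫ biprod.snd) := by rw [biprod.lift_snd]; infer_instance
    exact mono_of_mono _ (biprod.snd : Y ⊞ P ⟶ P)
  · dsimp
    rw [epi_iff_surjective_up_to_refinements]
    intro A z
    obtain ⟨A', q, hq, p, hp⟩ := surjective_up_to_refinements_of_epi π (z ≫ g)
    have hz : (q ≫ z - p ≫ φ) ≫ g = 0 := by
      rw [Preadditive.sub_comp, Category.assoc, Category.assoc, hφ, hp, sub_self]
    have hl : h.exact.lift (q ≫ z - p ≫ φ) hz ≫ f = q ≫ z - p ≫ φ := h.exact.lift_f _ hz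
    exact ⟨A', q, hq, biprod.lift (h.exact.lift (q ≫ z - p ≫ φ) hz) p, by
      rw [biprod.lift_desc, hl, sub_add_cancel]⟩

/-- The kernel of a composition of epimorphisms is an extension of their kernels. -/
lemma HasShortExact.exists_kernel_comp {K V X Y Z : C} (h : HasShortExact K V Y)
    (h' : HasShortExact X Y Z) : ∃ W : C, HasShortExact W V Z ∧ HasShortExact K W X := by
  obtain ⟨k, p, w, h⟩ := h
  obtain ⟨f, g, w', h'⟩ := h'
  have : Mono k := h.mono_f
  have : Epi p := h.epi_g
  have : Mono f := h'.mono_f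
  have : Epi g := h'.epi_g
  have h0 : (kernel.ι (p ≫ g) ≫ p) ≫ g = 0 := by rw [Category.assoc, kernel.condition]
  have hl : h'.exact.lift (kernel.ι (p ≫ g) ≫ p) h0 ≫ f = kernel.ι (p ≫ g) ≫ p :=
    h'.exact.lift_f _ h0
  have hj : kernel.lift (p ≫ g) k (by rw [reassoc_of% w, zero_comp]) ≫ kernel.ι (p ≫ g) = k :=
    kernel.lift_ι _ _ _
  refine ⟨kernel (p ≫ g), hasShortExact_kernel _,
    kernel.lift (p ≫ g) k (by rw [reassoc_of% w, zero_comp]),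
    h'.exact.lift (kernel.ι (p ≫ g) ≫ p) h0, ?_, ?_⟩
  · rw [← cancel_mono f, Category.assoc, hl, reassoc_of% hj, w, zero_comp]
  refine { exact := ?_, mono_f := ?_, epi_g := ?_ }
  · refine ShortComplex.exact_of_f_is_kernel _ (KernelFork.IsLimit.ofι' _ _ fun {A} t ht => ?_)
    dsimp at t ht
    have h1 : (t ≫ kernel.ι (p ≫ g)) ≫ p = 0 := by
      rw [Category.assoc, ← hl, reassoc_of% ht, zero_comp]
    refine ⟨h.exact.lift _ h1, ?_⟩
    dsimp
    rw [← cancel_mono (kernel.ι (p ≫ g)), Category.assoc, hj]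
    exact h.exact.lift_f _ h1
  · exact mono_of_mono_fac hj
  · rw [epi_iff_surjective_up_to_refinements]
    intro A x
    obtain ⟨A', q, hq, y, hy⟩ := surjective_up_to_refinements_of_epi p (x ≫ f)
    have h1 : y ≫ p ≫ g = 0 := by rw [← reassoc_of% hy, w', comp_zero, comp_zero]
    refine ⟨A', q, hq, kernel.lift _ y h1, ?_⟩
    rw [← cancel_mono f, Category.assoc, hy, Category.assoc]
    exact (congrArg (kernel.lift _ y h1 ≫ ·) hl).trans (kernel.lift_ι_assoc _ _ _ _) |>.symm

end ShortExact

section ShortExactZero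

variable {C : Type u} [Category.{v} C] [Abelian C]

lemma HasShortExact.nonempty_iso {X Y Z : C} (h : HasShortExact X Y Z) (hX : IsZero X) :
    Nonempty (Y ≅ Z) := by
  obtain ⟨f, g, w, h⟩ := h
  have : Epi g := h.epi_g
  have : Mono g := (h.exact.mono_g_iff).2 (hX.eq_of_src f 0)
  have : IsIso g := isIso_of_mono_of_epi g
  exact ⟨asIso g⟩

lemma hasShortExact_of_iso {X Y Z : C} (hX : IsZero X) (α : Y ≅ Z) : HasShortExact X Y Z :=
  ⟨0, α.hom, zero_comp, {
    exact := (ShortComplex.exact_iff_mono _ rfl).2 (inferInstanceAs (Mono α.hom))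
    mono_f := ⟨fun _ _ _ => hX.eq_of_tgt _ _⟩
    epi_g := inferInstanceAs (Epi α.hom) }⟩

end ShortExactZero

section Syzygy

variable {C : Type u} [Category.{v} C] [Abelian C]

lemma projective_of_isZero {X : C} (hX : IsZero X) : Projective X :=
  ⟨fun _ _ _ => ⟨0, hX.eq_of_src _ _⟩⟩

lemma exists_isSyzygy [EnoughProjectives C] (X : C) : ∃ K : C, IsSyzygy K X :=
  ⟨_, isSyzygy_iff.2 ⟨_, inferInstance, hasShortExact_kernel (Projective.π X)⟩⟩

lemma IsSyzygy.of_iso {K X X' : C} (h : IsSyzygy K X) (α : X ≅ X') : IsSyzygy K X' := by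
  obtain ⟨P, hP, h⟩ := isSyzygy_iff.1 h
  exact isSyzygy_iff.2 ⟨P, hP, h.of_iso (Iso.refl _) (Iso.refl _) α⟩

lemma IsSyzygy.biprod_right {K X Q : C} (h : IsSyzygy K X) (hQ : Projective Q) :
    IsSyzygy K (X ⊞ Q) := by
  obtain ⟨P, hP, h⟩ := isSyzygy_iff.1 h
  exact isSyzygy_iff.2 ⟨P ⊞ Q, inferInstance, h.biprod_right Q⟩

lemma IsNthSyzygy.of_iso {n : ℕ} {K X X' : C} (h : IsNthSyzygy n K X) (α : X ≅ X') :
    ∃ K' : C, IsNthSyzygy n K' X' ∧ Nonempty (K ≅ K') := by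
  induction n generalizing K with
  | zero => exact ⟨X', rfl, ⟨eqToIso h ≪≫ α⟩⟩
  | succ n ih =>
    obtain ⟨Y, hY, hK⟩ := h
    obtain ⟨Y', hY', ⟨β⟩⟩ := ih hY
    exact ⟨K, ⟨Y', hY', hK.of_iso β⟩, ⟨Iso.refl K⟩⟩

lemma IsNthSyzygy.map {D : Type u'} [Category.{v'} D] [Abelian D] (T : C ⥤ D) [T.Additive]
    [PreservesFiniteLimits T] [PreservesFiniteColimits T]
    (hT : ∀ X : C, Projective X → Projective (T.obj X)) {n : ℕ} {K X : C}
    (h : IsNthSyzygy n K X) : IsNthSyzygy n (T.obj K) (T.obj X) := by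
  induction n generalizing K with
  | zero => exact congrArg T.obj h
  | succ n ih =>
    obtain ⟨Y, hY, hK⟩ := h
    obtain ⟨P, hP, hK⟩ := isSyzygy_iff.1 hK
    exact ⟨_, ih hY, isSyzygy_iff.2 ⟨_, hT P hP, hK.map T⟩⟩

/-- Given `0 → X → Y → Z → 0`, chosen `n`-th syzygies of `X` and `Y` fit, up to a projective
summand, into a short exact sequence with some `n`-th syzygy of `Z`. -/
lemma HasShortExact.exists_nthSyzygy {n : ℕ} {X Y Z K L : C} (h : HasShortExact X Y Z)
    (hK : IsNthSyzygy n K X) (hL : IsNthSyzygy n L Y) :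
    ∃ M Q : C, Projective Q ∧ IsNthSyzygy n M Z ∧ HasShortExact K (L ⊞ Q) M := by
  induction n generalizing K L with
  | zero =>
    obtain rfl : K = X := hK
    obtain rfl : L = Y := hL
    exact ⟨Z, ⊥_ C, projective_of_isZero initialIsInitial.isZero, rfl,
      h.of_iso (Iso.refl _) (isoBiprodZero initialIsInitial.isZero) (Iso.refl _)⟩
  | succ n ih =>
    obtain ⟨K₁, hK₁, hK⟩ := hK
    obtain ⟨L₁, hL₁, hL⟩ := hL
    obtain ⟨M₁, Q₁, hQ₁, hM₁, h₁⟩ := ih hK₁ hL₁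
    obtain ⟨P, hP, hK⟩ := isSyzygy_iff.1 hK
    obtain ⟨R, hR, hL⟩ := isSyzygy_iff.1 (hL.biprod_right hQ₁)
    obtain ⟨M, hM, hLM⟩ := hL.exists_kernel_comp h₁
    exact ⟨M, P, hP, ⟨M₁, hM₁, isSyzygy_iff.2 ⟨R, hR, hM⟩⟩, hLM.rotate hK hP⟩

end Syzygy

section AddResolution

variable {C : Type u} [Category.{v} C] [Abelian C]

/-- `X` admits an exact sequence `0 → U_{m-1} → ⋯ → U₀ → X → 0` with `m` terms in `add U`. -/
def HasAddResolution (U : C) : ℕ → C → Prop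
  | 0, X => IsZero X
  | m + 1, X => ∃ V K : C, InAdd U V ∧ HasShortExact K V X ∧ HasAddResolution U m K

lemma HasAddResolution.mono {U V X : C} {m : ℕ} (hV : InAdd V U) (h : HasAddResolution U m X) :
    HasAddResolution V m X := by
  induction m generalizing X with
  | zero => exact h
  | succ m ih =>
    obtain ⟨W, K, hW, hs, hK⟩ := h
    exact ⟨W, K, hV.trans hW, hs, ih hK⟩

lemma HasAddResolution.of_iso {U X X' : C} {m : ℕ} (h : HasAddResolution U m X) (α : X ≅ X') :
    HasAddResolution U m X' := by
  cases m with
  | zero => exact IsZero.of_iso h α.symm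
  | succ m =>
    obtain ⟨W, K, hW, hs, hK⟩ := h
    exact ⟨W, K, hW, hs.of_iso (Iso.refl _) (Iso.refl _) α, hK⟩

lemma HasAddResolution.of_isZero (U : C) {X : C} (hX : IsZero X) (m : ℕ) :
    HasAddResolution U m X := by
  induction m with
  | zero => exact hX
  | succ m ih => exact ⟨X, X, InAdd.of_isZero U hX, hasShortExact_of_iso hX (Iso.refl X), ih⟩

lemma HasAddResolution.biprod_right {U X Q : C} {m : ℕ} (h : HasAddResolution U (m + 1) X)
    (hQ : InAdd U Q) : HasAddResolution U (m + 1) (X ⊞ Q) := by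
  obtain ⟨W, K, hW, hs, hK⟩ := h
  exact ⟨W ⊞ Q, K, hW.biprod hQ, hs.biprod_right Q, hK⟩

lemma HasAddResolution.map {D : Type u'} [Category.{v'} D] [Abelian D] (T : C ⥤ D) [T.Additive]
    [PreservesFiniteLimits T] [PreservesFiniteColimits T] {U X : C} {m : ℕ}
    (h : HasAddResolution U m X) : HasAddResolution (T.obj U) m (T.obj X) := by
  induction m generalizing X with
  | zero => exact T.map_isZero h
  | succ m ih =>
    obtain ⟨W, K, hW, hs, hK⟩ := h
    exact ⟨_, _, hW.map T, hs.map T, ih hK⟩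

lemma HasAddResolution.exists_seq {U X : C} {m : ℕ} (h : HasAddResolution U (m + 1) X) :
    ∃ (Y : ℕ → C) (d : ∀ k, Y (k + 1) ⟶ Y k), Y 0 = X ∧ (∀ k ≤ m, InAdd U (Y (k + 1))) ∧
      IsExactSeq (m + 1) Y d := by
  induction m generalizing X with
  | zero =>
    obtain ⟨W, K, hW, hs, hK⟩ := h
    obtain ⟨α⟩ := hs.nonempty_iso hK
    refine ⟨fun k => match k with | 0 => X | _ + 1 => W,
      fun k => match k with | 0 => α.hom | _ + 1 => 𝟙 W, rfl, fun _ _ => hW, ?_, ?_, ?_⟩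
    · exact inferInstanceAs (Mono α.hom)
    · exact inferInstanceAs (Epi α.hom)
    · intro j hj
      omega
  | succ m ih =>
    obtain ⟨W, K, hW, ⟨f, g, w, hs⟩, hK⟩ := h
    have : Mono f := hs.mono_f
    have : Epi g := hs.epi_g
    obtain ⟨Y, d, rfl, hY, hmono, hepi, hex⟩ := ih hK
    refine ⟨fun k => match k with | 0 => X | 1 => W | j + 2 => Y (j + 1),
      fun k => match k with | 0 => g | 1 => d 0 ≫ f | j + 2 => d (j + 1), rfl, ?_, ?_, hs.epi_g, ?_⟩
    · rintro (_ | k) hk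
      · exact hW
      · exact hY k (by omega)
    · cases m with
      | zero =>
        have : Mono (d 0) := hmono
        exact mono_comp (d 0) f
      | succ m => exact hmono
    · rintro (_ | _ | j) hj
      · refine ⟨by simp [w], ?_⟩
        let φ : ShortComplex.mk (d 0 ≫ f) g (by simp [w]) ⟶ ShortComplex.mk f g w :=
          { τ₁ := d 0, τ₂ := 𝟙 _, τ₃ := 𝟙 _ }
        have : Epi φ.τ₁ := hepi
        have : IsIso φ.τ₂ := inferInstanceAs (IsIso (𝟙 W))
        have : Mono φ.τ₃ := inferInstanceAs (Mono (𝟙 X))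
        exact (ShortComplex.exact_iff_of_epi_of_isIso_of_mono φ).2 hs.exact
      · obtain ⟨w', h'⟩ := hex 0 (by omega)
        refine ⟨by simp [reassoc_of% w'], ?_⟩
        let φ : ShortComplex.mk (d 1) (d 0) w' ⟶
            ShortComplex.mk (d 1) (d 0 ≫ f) (by simp [reassoc_of% w']) :=
          { τ₁ := 𝟙 _, τ₂ := 𝟙 _, τ₃ := f }
        have : Epi φ.τ₁ := inferInstanceAs (Epi (𝟙 _))
        have : IsIso φ.τ₂ := inferInstanceAs (IsIso (𝟙 _))
        have : Mono φ.τ₃ := hs.mono_f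
        exact (ShortComplex.exact_iff_of_epi_of_isIso_of_mono φ).1 h'
      · exact hex (j + 1) (by omega)

lemma HasAddResolution.of_seq {U : C} {m : ℕ} (Y : ℕ → C) (d : ∀ k, Y (k + 1) ⟶ Y k)
    (hY : ∀ k ≤ m, InAdd U (Y (k + 1))) (h : IsExactSeq (m + 1) Y d) :
    HasAddResolution U (m + 1) (Y 0) := by
  induction m generalizing Y with
  | zero =>
    obtain ⟨hmono, hepi, -⟩ := h
    have : Mono (d 0) := hmono
    have : IsIso (d 0) := isIso_of_mono_of_epi _
    exact ⟨_, ⊥_ C, hY 0 le_rfl, hasShortExact_of_iso initialIsInitial.isZero (asIso (d 0)),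
      initialIsInitial.isZero⟩
  | succ m ih =>
    obtain ⟨hmono, hepi, hex⟩ := h
    obtain ⟨w, h0⟩ := hex 0 (by omega)
    refine ⟨Y 1, kernel (d 0), hY 0 (by omega), hasShortExact_kernel _, ?_⟩
    refine ih (fun k => match k with | 0 => kernel (d 0) | j + 1 => Y (j + 2))
      (fun k => match k with | 0 => kernel.lift (d 0) (d 1) w | j + 1 => d (j + 2))
      (fun k hk => hY (k + 1) (by omega)) ⟨?_, ?_, ?_⟩
    · cases m with
      | zero =>
        have : Mono (d 1) := hmono
        exact mono_of_mono_fac (kernel.lift_ι (d 0) (d 1) w)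
      | succ m => exact hmono
    · exact (ShortComplex.exact_iff_epi_kernel_lift _).1 h0
    · rintro (_ | j) hj
      · obtain ⟨w', h'⟩ := hex 1 (by omega)
        have w'' : d 2 ≫ kernel.lift (d 0) (d 1) w = 0 := by
          simp [← cancel_mono (kernel.ι (d 0)), w']
        let φ : ShortComplex.mk (d 2) (kernel.lift (d 0) (d 1) w) w'' ⟶
            ShortComplex.mk (d 2) (d 1) w' :=
          { τ₁ := 𝟙 _, τ₂ := 𝟙 _, τ₃ := kernel.ι (d 0) }
        have : Epi φ.τ₁ := inferInstanceAs (Epi (𝟙 _))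
        have : IsIso φ.τ₂ := inferInstanceAs (IsIso (𝟙 _))
        have : Mono φ.τ₃ := inferInstanceAs (Mono (kernel.ι (d 0)))
        exact ⟨w'', (ShortComplex.exact_iff_of_epi_of_isIso_of_mono φ).2 h'⟩
      · exact hex (j + 2) (by omega)

lemma isITCategory_iff {m n : ℕ} : IsITCategory C m n ↔
    ∃ U : C, ∀ A : C, ∃ K : C, IsNthSyzygy n K A ∧ HasAddResolution U (m + 1) K := by
  refine exists_congr fun U => forall_congr' fun A => exists_congr fun K =>
    and_congr_right fun _ => ⟨?_, fun h => ?_⟩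
  · rintro ⟨Us, hUs, d, h⟩
    exact HasAddResolution.of_seq (fun j => if j = 0 then K else Us (j - 1)) d hUs h
  · obtain ⟨Y, d, rfl, hY, h⟩ := h.exists_seq
    refine ⟨fun k => Y (k + 1), hY, ?_⟩
    have key : ∀ Z : ℕ → C, Y = Z → ∃ d : ∀ k, Z (k + 1) ⟶ Z k, IsExactSeq (m + 1) Z d := by
      rintro _ rfl
      exact ⟨d, h⟩
    exact key (fun j => if j = 0 then Y 0 else Y (j - 1 + 1)) (funext fun j => by cases j <;> simp)

variable {P : C}

/-- Any syzygy of an object of `add U` lies in `add V` as soon as `V` sees a syzygy of `U` and all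
projective objects. -/
lemma InAdd.of_hasShortExact {U V X Q K R L : C} (hX : InAdd U X) (hK : HasShortExact K Q X)
    (hQ : Projective Q) (hL : HasShortExact L R U) (hR : Projective R) (hVL : InAdd V L)
    (hVQ : InAdd V Q) : InAdd V K := by
  obtain ⟨n, s, p, hsp⟩ := inAdd_iff.1 hX
  obtain ⟨ι, π, w, hK⟩ := hK
  obtain ⟨ι', π', w', hL⟩ := hL
  have : Mono ι := hK.mono_f
  have : Epi π := hK.epi_g
  have : Mono ι' := hL.mono_f
  have : Epi π' := hL.epi_g
  let σ (j : Fin n) : Q ⟶ R := Projective.factorThru (π ≫ s j) π'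
  let ρ (j : Fin n) : R ⟶ Q := Projective.factorThru (π' ≫ p j) π
  have hσ (j : Fin n) : σ j ≫ π' = π ≫ s j := Projective.factorThru_comp _ _
  have hρ (j : Fin n) : ρ j ≫ π = π' ≫ p j := Projective.factorThru_comp _ _
  have hσ0 (j : Fin n) : (ι ≫ σ j) ≫ π' = 0 := by rw [Category.assoc, hσ, reassoc_of% w, zero_comp]
  have hρ0 (j : Fin n) : (ι' ≫ ρ j) ≫ π = 0 := by
    rw [Category.assoc, hρ, reassoc_of% w', zero_comp]
  let σ' (j : Fin n) : K ⟶ L := hL.exact.lift _ (hσ0 j)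
  let ρ' (j : Fin n) : L ⟶ K := hK.exact.lift _ (hρ0 j)
  have hσ' (j : Fin n) : σ' j ≫ ι' = ι ≫ σ j := hL.exact.lift_f _ _
  have hρ' (j : Fin n) : ρ' j ≫ ι = ι' ≫ ρ j := hK.exact.lift_f _ _
  have hτ0 : (𝟙 Q - ∑ j, σ j ≫ ρ j) ≫ π = 0 := by
    simp only [Preadditive.sub_comp, Preadditive.sum_comp, Category.assoc, hρ, reassoc_of% hσ,
      ← Preadditive.comp_sum, ← hsp]
    simp
  let τ : Q ⟶ K := hK.exact.lift _ hτ0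
  have hτ : τ ≫ ι = 𝟙 Q - ∑ j, σ j ≫ ρ j := hK.exact.lift_f _ _
  have : 𝟙 K = (∑ j, σ' j ≫ ρ' j) + ι ≫ τ := by
    rw [← cancel_mono ι]
    simp only [Preadditive.add_comp, Preadditive.sum_comp, Category.assoc, hρ', reassoc_of% hσ', hτ,
      Preadditive.comp_sub, Preadditive.comp_sum]
    simp
  rw [inAdd_iff, this]
  exact add_mem (sum_mem fun j _ => hVL.comp_mem _ _) (hVQ.comp_mem _ _)

/-- Passing to a syzygy preserves the length of resolutions by objects of the form `add U`. -/
lemma exists_isSyzygy_hasAddResolution [EnoughProjectives C]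
    (hP : ∀ Q : C, Projective Q → InAdd P Q) (U : C) :
    ∃ V : C, InAdd V U ∧ InAdd V P ∧ ∀ (m : ℕ) (X : C), HasAddResolution U m X →
      ∃ K : C, IsSyzygy K X ∧ HasAddResolution V m K := by
  obtain ⟨L, hL⟩ := exists_isSyzygy U
  obtain ⟨R, hR, hL⟩ := isSyzygy_iff.1 hL
  have hVL : InAdd ((U ⊞ L) ⊞ P) L := (InAdd.left _ _).trans (InAdd.right _ _)
  have hVP : InAdd ((U ⊞ L) ⊞ P) P := InAdd.right _ _
  refine ⟨(U ⊞ L) ⊞ P, (InAdd.left _ _).trans (InAdd.left _ _), hVP, fun m => ?_⟩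
  induction m with
  | zero =>
    exact fun X hX => ⟨X, isSyzygy_iff.2
      ⟨X, projective_of_isZero hX, hasShortExact_of_iso hX (Iso.refl X)⟩, hX⟩
  | succ m ih =>
    rintro X ⟨W, K, hW, hs, hK⟩
    obtain ⟨K', hK', hK'V⟩ := ih K hK
    obtain ⟨W', hW'⟩ := exists_isSyzygy W
    obtain ⟨Q, hQ, hW'⟩ := isSyzygy_iff.1 hW'
    obtain ⟨T, hT, hWT⟩ := hW'.exists_kernel_comp hs
    obtain ⟨Q', hQ', hK'⟩ := isSyzygy_iff.1 hK'
    exact ⟨T, isSyzygy_iff.2 ⟨Q, hQ, hT⟩, W' ⊞ Q', K',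
      (hW.of_hasShortExact hW' hQ hL hR hVL (hVP.trans (hP Q hQ))).biprod (hVP.trans (hP Q' hQ')),
      hWT.rotate hK' hQ', hK'V⟩

lemma exists_isNthSyzygy_hasAddResolution [EnoughProjectives C]
    (hP : ∀ Q : C, Projective Q → InAdd P Q) (U : C) (j : ℕ) :
    ∃ V : C, ∀ (n m : ℕ) (X K : C), IsNthSyzygy n K X → HasAddResolution U m K →
      ∃ L : C, IsNthSyzygy (n + j) L X ∧ HasAddResolution V m L := by
  induction j with
  | zero => exact ⟨U, fun n m X K hK h => ⟨K, hK, h⟩⟩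
  | succ j ih =>
    obtain ⟨V, hV⟩ := ih
    obtain ⟨V', -, -, hV'⟩ := exists_isSyzygy_hasAddResolution hP V
    refine ⟨V', fun n m X K hK h => ?_⟩
    obtain ⟨L, hL, h⟩ := hV n m X K hK h
    obtain ⟨L', hL', h⟩ := hV' m L h
    exact ⟨L', ⟨L, hL, hL'⟩, h⟩

/-- Resolutions of the first two terms of a short exact sequence yield one of the third term. -/
lemma exists_hasAddResolution_right [EnoughProjectives C]
    (hP : ∀ Q : C, Projective Q → InAdd P Q) (a b : ℕ) (U : C) :
    ∃ V : C, InAdd V U ∧ ∀ X Y Z : C, HasShortExact X Y Z → HasAddResolution U a Y →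
      HasAddResolution U b X → HasAddResolution V (b + a) Z := by
  induction a generalizing U with
  | zero =>
    exact ⟨U, InAdd.self U, fun X Y Z h hY _ => HasAddResolution.of_isZero U (h.isZero_right hY) _⟩
  | succ a ih =>
    obtain ⟨U', hU', hU'P, h'⟩ := exists_isSyzygy_hasAddResolution hP U
    obtain ⟨V, hV, hVext⟩ := ih U'
    refine ⟨V, hV.trans hU', fun X Y Z h hY hX => ?_⟩
    obtain ⟨W, K, hW, hs, hK⟩ := hY
    obtain ⟨T, hT, hKT⟩ := hs.exists_kernel_comp h
    refine ⟨W, T, hV.trans (hU'.trans hW), hT, ?_⟩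
    cases a with
    | zero =>
      obtain ⟨α⟩ := hKT.nonempty_iso hK
      exact (hX.mono (hV.trans hU')).of_iso α.symm
    | succ a =>
      obtain ⟨X', hX', hX'U⟩ := h' b X hX
      obtain ⟨Q, hQ, hX'⟩ := isSyzygy_iff.1 hX'
      exact hVext X' (K ⊞ Q) T (hKT.rotate hX' hQ)
        ((hK.mono hU').biprod_right (hU'P.trans (hP Q hQ))) hX'U

end AddResolution

section Retraction

variable {C : Type u} [Category.{v} C] [Abelian C]

lemma nonempty_iso_cokernel_of_section {S : ShortComplex C} (h : S.ShortExact) (s : S.X₃ ⟶ S.X₂)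
    (hs : s ≫ S.g = 𝟙 S.X₃) : Nonempty (S.X₁ ≅ cokernel s) := by
  let σ : S.Splitting := ShortComplex.Splitting.ofExactOfSection S h.exact s hs h.mono_f
  have : IsSplitEpi σ.r := ⟨⟨⟨S.f, σ.f_r⟩⟩⟩
  have hc : IsColimit (CokernelCofork.ofπ (f := s) σ.r σ.s_r) :=
    CokernelCofork.IsColimit.ofπ' _ _ fun {A} t ht => ⟨S.f ≫ t, by
      have := σ.id =≫ t
      rw [Preadditive.add_comp, Category.assoc, Category.assoc, show σ.s = s from rfl, ht,
        comp_zero, add_zero, Category.id_comp] at this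
      exact this⟩
  exact ⟨hc.coconePointUniqueUpToIso (colimit.isColimit _)⟩

end Retraction

section Distance

variable {𝒜 : Type u} [Category.{v} 𝒜] [Abelian 𝒜]

lemma ITdist_le_of_forall {m : ℕ} {U : 𝒜} {k : ℕ}
    (h : ∀ A : 𝒜, ∃ K : 𝒜, IsNthSyzygy k K A ∧ HasAddResolution U (m + 1) K) :
    ITdist 𝒜 ≤ m :=
  sInf_le ⟨m, k, rfl, isITCategory_iff.2 ⟨U, h⟩⟩

lemma exists_isITCategory (h : ITdist 𝒜 ≠ ⊤) : ∃ m k : ℕ, ITdist 𝒜 = m ∧ IsITCategory 𝒜 m k := by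
  have hne : {x : ℕ∞ | ∃ m n : ℕ, x = (m : ℕ∞) ∧ IsITCategory 𝒜 m n}.Nonempty := by
    by_contra hc
    rw [Set.not_nonempty_iff_eq_empty] at hc
    exact h (by rw [ITdist, hc, sInf_empty])
  exact csInf_mem hne

end Distance

/-- Let `(ℬ, 𝒜, i, e, l)` be a cleft extension of abelian categories such
that `l` is exact and `e` preserves projectives.  If the induced endofunctor `F` satisfies
`Fⁿ = 0` for a positive integer `n`, and `Proj 𝒜 = add P` for some projective object `P` of
`𝒜`, then `IT(ℬ) ≤ IT(𝒜) ≤ n(IT(ℬ) + 1) − 1`. -/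
theorem ITdist_cleftExtension
    {𝒜 : Type u} [Category.{v} 𝒜] [Abelian 𝒜] [EnoughProjectives 𝒜]
    {ℬ : Type u'} [Category.{v'} ℬ] [Abelian ℬ] [EnoughProjectives ℬ]
    (i : ℬ ⥤ 𝒜) (e : 𝒜 ⥤ ℬ) (l : ℬ ⥤ 𝒜)
    [i.Additive] [e.Additive] [l.Additive]
    [e.Faithful] [PreservesFiniteLimits e] [PreservesFiniteColimits e]
    [PreservesFiniteLimits l] [PreservesFiniteColimits l]
    (adj : l ⊣ e) (η : i ⋙ e ≅ 𝟭 ℬ)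
    (heproj : ∀ X : 𝒜, Projective X → Projective (e.obj X))
    (G : 𝒜 ⥤ 𝒜) (κ : G ⟶ e ⋙ l) (hκ : ∀ X : 𝒜, κ.app X ≫ adj.counit.app X = 0)
    (hker : ∀ X : 𝒜, IsLimit (KernelFork.ofι (κ.app X) (hκ X)))
    (F : ℬ ⥤ ℬ) (hFG : F ≅ i ⋙ G ⋙ e)
    (n : ℕ) (hn : 0 < n) (hFn : ∀ B : ℬ, IsZero ((fpow F n).obj B))
    (P : 𝒜) (hP : Projective P) (hPadd : ∀ X : 𝒜, Projective X ↔ InAdd P X) :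
    ITdist ℬ ≤ ITdist 𝒜 ∧ ITdist 𝒜 ≤ (n : ℕ∞) * (ITdist ℬ + 1) - 1 := by
  have hlproj (X : ℬ) (hX : Projective X) : Projective (l.obj X) := adj.map_projective X hX
  have hS (A : 𝒜) : (ShortComplex.mk (κ.app A) (adj.counit.app A) (hκ A)).ShortExact :=
    { exact := ShortComplex.exact_of_f_is_kernel _ (hker A)
      mono_f := Fork.IsLimit.mono (hker A)
      epi_g := inferInstanceAs (Epi (adj.counit.app A)) }
  have hG (A : 𝒜) : HasShortExact (G.obj A) (l.obj (e.obj A)) A := ⟨_, _, _, hS A⟩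
  constructor
  · by_cases htop : ITdist 𝒜 = ⊤
    · rw [htop]
      exact le_top
    obtain ⟨m, k, hm, hIT⟩ := exists_isITCategory htop
    obtain ⟨U, hU⟩ := isITCategory_iff.1 hIT
    rw [hm]
    refine ITdist_le_of_forall (U := e.obj U) (k := k) fun B => ?_
    obtain ⟨K, hK, hKU⟩ := hU (i.obj B)
    obtain ⟨K', hK', ⟨α⟩⟩ := (hK.map e heproj).of_iso (η.app B)
    exact ⟨K', hK', (hKU.map e).of_iso α⟩
  · by_cases htop : ITdist ℬ = ⊤
    · rw [htop, top_add, ENat.mul_top (by exact_mod_cast hn.ne')]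
      exact le_top
    obtain ⟨m, k, hm, hIT⟩ := exists_isITCategory htop
    obtain ⟨U, hU⟩ := isITCategory_iff.1 hIT
    have hPQ (Q : 𝒜) (hQ : Projective Q) : InAdd P Q := (hPadd Q).1 hQ
    have hcoker (A : 𝒜) : Nonempty (e.obj (G.obj A) ≅ cokernel (adj.unit.app (e.obj A))) :=
      nonempty_iso_cokernel_of_section ((hS A).map_of_exact e) (adj.unit.app (e.obj A))
        (adj.right_triangle_components A)
    have hFe (A : 𝒜) : Nonempty (F.obj (e.obj A) ≅ e.obj (G.obj A)) := by
      obtain ⟨α⟩ := hcoker A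
      obtain ⟨β⟩ := hcoker (i.obj (e.obj A))
      let γ : e.obj (i.obj (e.obj A)) ≅ e.obj A := η.app (e.obj A)
      exact ⟨hFG.app (e.obj A) ≪≫ β ≪≫ cokernel.mapIso _ _ γ (e.mapIso (l.mapIso γ))
        (adj.unit.naturality γ.hom).symm ≪≫ α.symm⟩
    have hcomm (j : ℕ) (B : ℬ) : Nonempty ((fpow F (j + 1)).obj B ≅ (fpow F j).obj (F.obj B)) := by
      induction j with
      | zero => exact ⟨Iso.refl _⟩
      | succ j ih =>
        obtain ⟨α⟩ := ih
        exact ⟨F.mapIso α⟩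
    have main (j : ℕ) : ∃ (k' : ℕ) (V : 𝒜), ∀ A : 𝒜, IsZero ((fpow F j).obj (e.obj A)) →
        ∃ K : 𝒜, IsNthSyzygy k' K A ∧ HasAddResolution V (j * (m + 1)) K := by
      induction j with
      | zero =>
        refine ⟨0, P, fun A hA => ⟨A, rfl, HasAddResolution.of_isZero P ?_ _⟩⟩
        rw [IsZero.iff_id_eq_zero]
        exact e.map_injective (hA.eq_of_src _ _)
      | succ j ih =>
        obtain ⟨k', V, hV⟩ := ih
        obtain ⟨V₁, hV₁⟩ := exists_isNthSyzygy_hasAddResolution hPQ V k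
        obtain ⟨V₂, hV₂⟩ := exists_isNthSyzygy_hasAddResolution hPQ (l.obj U) k'
        obtain ⟨W, -, hW⟩ :=
          exists_hasAddResolution_right hPQ (m + 1) (j * (m + 1)) ((V₁ ⊞ V₂) ⊞ P)
        refine ⟨k' + k, W, fun A hA => ?_⟩
        obtain ⟨α⟩ := hFe A
        obtain ⟨β⟩ := hcomm j (e.obj A)
        obtain ⟨X, hX, hXV⟩ := hV (G.obj A) (hA.of_iso ((fpow F j).mapIso α.symm ≪≫ β.symm))
        obtain ⟨X₁, hX₁, hXV₁⟩ := hV₁ _ _ _ _ hX hXV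
        obtain ⟨Y, hY, hYU⟩ := hU (e.obj A)
        obtain ⟨Y₁, hY₁, hYV₁⟩ := hV₂ _ _ _ _ (hY.map l hlproj) (hYU.map l)
        rw [add_comm k k'] at hY₁
        obtain ⟨M, Q, hQ, hM, hs⟩ := (hG A).exists_nthSyzygy hX₁ hY₁
        refine ⟨M, hM, ?_⟩
        rw [Nat.succ_mul]
        exact hW _ _ _ hs
          ((hYV₁.mono ((InAdd.left _ _).trans (InAdd.right _ _))).biprod_right
            ((InAdd.right _ _).trans (hPQ Q hQ)))
          (hXV₁.mono ((InAdd.left _ _).trans (InAdd.left _ _)))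
    obtain ⟨k', V, hV⟩ := main n
    obtain ⟨N, hN⟩ : ∃ N, n * (m + 1) = N + 1 := Nat.exists_eq_succ_of_ne_zero (by positivity)
    have hle : ITdist 𝒜 ≤ N := ITdist_le_of_forall (U := V) (k := k') fun A => by
      simpa only [hN] using hV A (hFn _)
    have hcast : (n : ℕ∞) * (m + 1) = N + 1 := by exact_mod_cast hN
    rw [hm, hcast]
    refine hle.trans (le_of_eq ?_)
    exact_mod_cast (Nat.add_sub_cancel (n := N) (m := 1)).symm
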